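/- Let d be a positive integer, let T : ℝ^d → ℝ^d be an invertible linear map with lattice Λ = T(ℤ^d) and fundamental domain D = T([0,1)^d), and let p, r ∈ (0,∞] satisfy r ≤ min(1,p). Let f : ℝ^d → ℂ be measurable with |f(x + T(k))| = |f(x)| for all x ∈ ℝ^d and k ∈ ℤ^d, and let a : ℤ^d → ℂ satisfy ‖a‖_{ℓ^r(ℤ^d)} < ∞. Define g(x) = Σ_{k∈ℤ^d} |a(k)|·|f(x − T(k))|. Then ‖g‖_{L^p(D)} ≤ ‖a‖_{ℓ^r(ℤ^d)}·‖f‖_{L^p(D)}. -/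

import Mathlib

open MeasureTheory ENNReal

/-- The `L^p` quasi-norm of an `ℝ≥0∞`-valued function:
`(∫ g^p)^(1/p)` for `p < ∞`, and the essential supremum for `p = ∞`. -/
noncomputable def eLpNormENN {α : Type*} [MeasurableSpace α] (g : α → ℝ≥0∞)
    (p : ℝ≥0∞) (μ : Measure α) : ℝ≥0∞ :=
  if p = ⊤ then essSup g μ else (∫⁻ x, g x ^ p.toReal ∂μ) ^ (1 / p.toReal)

theorem aux_finset {ι : Type*} (s : Finset ι) (b : ι → ℝ≥0∞) (t : ℝ) (h0 : 0 < t) (h1 : t ≤ 1) :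
    (∑ i ∈ s, b i) ^ t ≤ ∑ i ∈ s, b i ^ t := by
  classical
  induction s using Finset.induction_on with
  | empty => simp [h0]
  | insert i s hi ih =>
    rw [Finset.sum_insert hi, Finset.sum_insert hi]
    exact (ENNReal.rpow_add_le_add_rpow _ _ h0.le h1).trans (by gcongr)

theorem aux_tsum {ι : Type*} (b : ι → ℝ≥0∞) (t : ℝ) (h0 : 0 < t) (h1 : t ≤ 1) :
    ∑' i, b i ≤ (∑' i, b i ^ t) ^ (1 / t) := by
  rw [ENNReal.tsum_eq_iSup_sum]
  refine iSup_le fun s => ?_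
  rw [one_div, ENNReal.le_rpow_inv_iff h0]
  exact (aux_finset s b t h0 h1).trans (ENNReal.sum_le_tsum s)

/-- If `f` has `Λ`-periodic absolute value for the lattice `Λ = T(ℤ^d)`,
`D = T([0,1)^d)` is a fundamental domain, `r ≤ min(1,p)`, `‖a‖_{ℓ^r} < ∞`, and
`g(x) = Σ_k |a(k)|·|f(x − T(k))|`, then `‖g‖_{L^p(D)} ≤ ‖a‖_{ℓ^r}·‖f‖_{L^p(D)}`. -/
theorem stmt_8 (d : ℕ) (hd : 0 < d) (T : (Fin d → ℝ) ≃ₗ[ℝ] (Fin d → ℝ))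
    (p r : ℝ≥0∞) (hp : 0 < p) (hr : 0 < r) (hrp : r ≤ min 1 p)
    (f : (Fin d → ℝ) → ℂ) (hf : Measurable f)
    (hper : ∀ (x : Fin d → ℝ) (k : Fin d → ℤ),
      ‖f (x + T (fun i => (k i : ℝ)))‖ = ‖f x‖)
    (a : (Fin d → ℤ) → ℂ)
    (ha : eLpNorm a r (Measure.count : Measure (Fin d → ℤ)) < ⊤)
    (g : (Fin d → ℝ) → ℝ≥0∞)
    (hg : ∀ x, g x = ∑' k : Fin d → ℤ,
      (‖a k‖₊ : ℝ≥0∞) * (‖f (x - T (fun i => (k i : ℝ)))‖₊ : ℝ≥0∞))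
    (D : Set (Fin d → ℝ))
    (hD : D = (⇑T) '' (Set.univ.pi fun _ => Set.Ico (0 : ℝ) 1)) :
    eLpNormENN g p (volume.restrict D)
      ≤ eLpNorm a r (Measure.count : Measure (Fin d → ℤ))
          * eLpNorm f p (volume.restrict D) := by
  have hr1 : r ≤ 1 := hrp.trans (min_le_left _ _)
  have hrt : r ≠ ⊤ := ne_top_of_le_ne_top ENNReal.one_ne_top hr1
  have hr0 : 0 < r.toReal := ENNReal.toReal_pos hr.ne' hrt
  have hr1' : r.toReal ≤ 1 := by
    simpa using ENNReal.toReal_mono ENNReal.one_ne_top hr1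
  have hS : ∑' k, ‖a k‖ₑ ≤ eLpNorm a r (Measure.count : Measure (Fin d → ℤ)) := by
    rw [eLpNorm_eq_lintegral_rpow_enorm_toReal hr.ne' hrt, lintegral_count]
    exact aux_tsum _ _ hr0 hr1'
  have hgS : g = fun x => (∑' k, ‖a k‖ₑ) * ‖f x‖ₑ := by
    funext x
    rw [hg, ← ENNReal.tsum_mul_right]
    refine tsum_congr fun k => ?_
    have h := hper (x - T (fun i => (k i : ℝ))) k
    rw [sub_add_cancel] at h
    have h2 : ‖f (x - T (fun i => (k i : ℝ)))‖₊ = ‖f x‖₊ := NNReal.eq h.symm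
    rw [h2]
    rfl
  have key : eLpNormENN g p (volume.restrict D)
      = (∑' k, ‖a k‖ₑ) * eLpNorm f p (volume.restrict D) := by
    rw [hgS, eLpNormENN]
    split_ifs with hpt
    · rw [hpt, eLpNorm_exponent_top, eLpNormEssSup, ENNReal.essSup_const_mul]
    · have hp0 : 0 < p.toReal := ENNReal.toReal_pos hp.ne' hpt
      rw [eLpNorm_eq_lintegral_rpow_enorm_toReal hp.ne' hpt]
      simp_rw [ENNReal.mul_rpow_of_nonneg _ _ hp0.le]
      rw [lintegral_const_mul _ (hf.enorm.pow_const _),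
        ENNReal.mul_rpow_of_nonneg _ _ (by positivity), ← ENNReal.rpow_mul,
        mul_one_div_cancel hp0.ne', ENNReal.rpow_one]
  rw [key]
  gcongr
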